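/- Let g be a continuous complex-valued function on the closed unit disk with ‖g‖_∞ = sup_{z∈𝔻}|g(z)|, and let G_g(z) = (1/(2π))∫_𝔻 G(z,w) g(w) dA(w) be its Green potential. Then for every z ∈ 𝔻: |G_g(z)| ≤ (‖g‖_∞/4)·(1−|z|²). -/

import Mathlib

open Metric MeasureTheory Set Filter

noncomputable section

/-- The Wirtinger derivative `∂f/∂z = (f_x - i f_y)/2`. -/
def wdz (f : ℂ → ℂ) (z : ℂ) : ℂ :=
  (fderiv ℝ f z 1 - Complex.I * fderiv ℝ f z Complex.I) / 2

/-- The Wirtinger derivative `∂f/∂z̄ = (f_x + i f_y)/2`. -/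
def wdzbar (f : ℂ → ℂ) (z : ℂ) : ℂ :=
  (fderiv ℝ f z 1 + Complex.I * fderiv ℝ f z Complex.I) / 2

/-- The Laplacian `Δf = f_xx + f_yy` (equivalently `4 f_{z z̄}`). -/
def lap (f : ℂ → ℂ) (z : ℂ) : ℂ :=
  fderiv ℝ (fun w => fderiv ℝ f w 1) z 1 +
    fderiv ℝ (fun w => fderiv ℝ f w Complex.I) z Complex.I

/-- The Poisson integral `P_ψ(z) = (1/2π) ∫₀^{2π} ((1-|z|²)/|1-z e^{-it}|²) ψ(e^{it}) dt`. -/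
def poissonIntegral (ψ : ℂ → ℂ) (z : ℂ) : ℂ :=
  (1 / (2 * Real.pi) : ℝ) • ∫ t in (0:ℝ)..(2 * Real.pi),
    (((1 - ‖z‖ ^ 2) / ‖1 - z * Complex.exp (-(Complex.I * (t : ℂ)))‖ ^ 2 : ℝ) : ℂ) *
      ψ (Complex.exp (Complex.I * (t : ℂ)))

/-- The Green potential `G_g(z) = (1/2π) ∫_𝔻 log|(1 - z w̄)/(z - w)| g(w) dA(w)`. -/
def greenPotential (g : ℂ → ℂ) (z : ℂ) : ℂ :=
  (1 / (2 * Real.pi) : ℝ) • ∫ w in ball (0:ℂ) 1,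
    ((Real.log ‖(1 - z * (starRingEnd ℂ) w) / (z - w)‖ : ℝ) : ℂ) * g w

/-- `sup_{z ∈ 𝔻} |g(z)|`. -/
def supD (g : ℂ → ℂ) : ℝ := sSup ((fun z => ‖g z‖) '' ball (0:ℂ) 1)

/-- The function `μ(r)` with constant `c` in place of `‖g‖_∞`. -/
def mu (c r : ℝ) : ℝ :=
  c * (1 - r ^ 2) / (8 * r ^ 2) *
    ((1 + r ^ 2) / (1 - r ^ 2) - (1 - r ^ 2) / (2 * r) * Real.log ((1 + r) / (1 - r)))

/-!
As `G ≥ 0`, the potential of `g` is bounded by `‖g‖_∞` times the potential of the constant `1`, and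
the latter equals `(1 - |z|²) / 4`. To see this, write `G(z, w) = log |1 - z̄ w| - log |w - z|`. The
first term is harmonic in `w` and vanishes at `w = 0`, so its integral over the disc is zero by the
mean value property. The average of the second term over the circle `|w| = r` is
`log (max r |z|)`, and integrating this against `2πr dr` gives `-(π / 2) (1 - |z|²)`.
-/

open Real InnerProductSpace
open scoped ComplexConjugate

section PolarCoordinates

variable {E : Type*} [NormedAddCommGroup E] [NormedSpace ℝ E]

theorem integrableOn_comp_polarCoord_symm_iff {f : ℝ × ℝ → E} :
    IntegrableOn (fun p ↦ p.1 • f (polarCoord.symm p)) polarCoord.target ↔ Integrable f := by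
  have hmeas : MeasurableSet polarCoord.target := polarCoord.open_target.measurableSet
  rw [← integrableOn_univ, ← integrableOn_congr_set_ae polarCoord_source_ae_eq_univ,
    ← polarCoord.symm_image_target_eq_source,
    integrableOn_image_iff_integrableOn_abs_det_fderiv_smul volume hmeas
      (fun p _ ↦ (hasFDerivAt_polarCoord_symm p).hasFDerivWithinAt) polarCoord.symm.injOn]
  refine integrableOn_congr_fun (fun p hp ↦ ?_) hmeas
  rw [det_fderivPolarCoordSymm, abs_of_pos hp.1]

theorem integrableOn_comp_complexPolarCoord_symm_iff {f : ℂ → E} :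
    IntegrableOn (fun p ↦ p.1 • f (Complex.polarCoord.symm p)) polarCoord.target ↔
      Integrable f := by
  rw [← Complex.volume_preserving_equiv_real_prod.symm.integrable_comp_emb
    Complex.measurableEquivRealProd.symm.measurableEmbedding,
    ← integrableOn_comp_polarCoord_symm_iff]
  rfl

theorem complexPolarCoord_symm_eq_circleMap (p : ℝ × ℝ) :
    Complex.polarCoord.symm p = circleMap 0 p.1 p.2 := by
  rw [Complex.polarCoord_symm_apply, circleMap_zero, Complex.exp_mul_I, Complex.ofReal_cos,
    Complex.ofReal_sin]

theorem setIntegral_circleMap_eq_smul_circleAverage (f : ℂ → E) (c : ℂ) (r : ℝ) :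
    ∫ θ in Ioo (-π) π, f (circleMap c r θ) = (2 * π) • circleAverage f c r := by
  rw [circleAverage_eq_integral_add (-π), smul_inv_smul₀ two_pi_pos.ne',
    intervalIntegral.integral_comp_add_right (fun θ ↦ f (circleMap c r θ)),
    intervalIntegral.integral_of_le (by linarith [pi_pos]), integral_Ioc_eq_integral_Ioo]
  ring_nf

theorem integral_eq_integral_circleAverage {f : ℂ → E} (hf : Integrable f) (c : ℂ) :
    ∫ w, f w = ∫ r in Ioi (0 : ℝ), (2 * π * r) • circleAverage f c r := by
  have hpolar := integrableOn_comp_complexPolarCoord_symm_iff.2 (hf.comp_add_right c)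
  have htarget : polarCoord.target = Ioi (0 : ℝ) ×ˢ Ioo (-π) π := rfl
  rw [← integral_add_right_eq_self f c, ← Complex.integral_comp_polarCoord_symm, htarget,
    Measure.volume_eq_prod, setIntegral_prod _ (by rwa [← Measure.volume_eq_prod, ← htarget])]
  refine integral_congr_ae (Eventually.of_forall fun r ↦ ?_)
  simp only [complexPolarCoord_symm_eq_circleMap]
  rw [integral_smul, setIntegral_circleMap_eq_smul_circleAverage (fun w ↦ f (w + c)),
    circleAverage_map_add_const, smul_smul, mul_comm r]

theorem circleAverage_indicator_ball (f : ℂ → E) (c : ℂ) (R : ℝ) {r : ℝ} (hr : 0 ≤ r) :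
    circleAverage ((ball c R).indicator f) c r = (Iio R).indicator (circleAverage f c) r := by
  have hmem (w : ℂ) (hw : w ∈ sphere c |r|) : w ∈ ball c R ↔ r ∈ Iio R := by
    rw [mem_ball, mem_sphere.1 hw, abs_of_nonneg hr, mem_Iio]
  by_cases hrR : r ∈ Iio R
  · rw [indicator_of_mem hrR]
    exact circleAverage_congr_sphere fun w hw ↦ indicator_of_mem ((hmem w hw).2 hrR) f
  · rw [indicator_of_notMem hrR]
    rw [circleAverage_congr_sphere (f₂ := 0) fun w hw ↦
      indicator_of_notMem (mt (hmem w hw).1 hrR) f]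
    simp [circleAverage]

theorem setIntegral_ball_eq_integral_circleAverage {f : ℂ → E} {c : ℂ} {R : ℝ} (hR : 0 ≤ R)
    (hf : IntegrableOn f (ball c R)) :
    ∫ w in ball c R, f w = ∫ r in 0..R, (2 * π * r) • circleAverage f c r := by
  rw [← integral_indicator measurableSet_ball,
    integral_eq_integral_circleAverage (hf.integrable_indicator measurableSet_ball) c,
    intervalIntegral.integral_of_le hR, integral_Ioc_eq_integral_Ioo, ← Ioi_inter_Iio,
    ← setIntegral_indicator measurableSet_Iio]
  refine setIntegral_congr_fun measurableSet_Ioi fun r hr ↦ ?_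
  rw [circleAverage_indicator_ball f c R (le_of_lt hr), indicator_smul_apply]

theorem setIntegral_ball_of_harmonicOnNhd [CompleteSpace E] {f : ℂ → E} {c : ℂ} {R : ℝ}
    (hR : 0 ≤ R) (hf : HarmonicOnNhd f (closedBall c R)) :
    ∫ w in ball c R, f w = (π * R ^ 2) • f c := by
  have hint : IntegrableOn f (ball c R) :=
    (hf.continuousOn.integrableOn_compact (isCompact_closedBall c R)).mono_set
      ball_subset_closedBall
  have hmean (r : ℝ) (hr : r ∈ uIcc 0 R) : circleAverage f c r = f c := by
    rw [uIcc_of_le hR] at hr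
    have hsub : closedBall c |r| ⊆ closedBall c R :=
      closedBall_subset_closedBall (by rw [abs_of_nonneg hr.1]; exact hr.2)
    exact InnerProductSpace.HarmonicOnNhd.circleAverage_eq fun w hw ↦ hf w (hsub hw)
  rw [setIntegral_ball_eq_integral_circleAverage hR hint,
    intervalIntegral.integral_congr fun r hr ↦ congrArg ((2 * π * r) • ·) (hmean r hr),
    intervalIntegral.integral_smul_const, intervalIntegral.integral_const_mul, integral_id]
  congr 1
  ring

end PolarCoordinates

section LogarithmicPotential

theorem integral_mul_log (a b : ℝ) :
    ∫ x in a..b, x * log x =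
      (b ^ 2 * log b / 2 - b ^ 2 / 4) - (a ^ 2 * log a / 2 - a ^ 2 / 4) := by
  have hcont : Continuous fun x : ℝ ↦ x ^ 2 * log x / 2 - x ^ 2 / 4 := by
    have : Continuous fun x : ℝ ↦ x * (x * log x) / 2 - x ^ 2 / 4 := by
      have := continuous_mul_log
      fun_prop
    exact this.congr fun x ↦ by ring
  refine integral_eq_of_hasDerivAt_off_countable (fun x ↦ x ^ 2 * log x / 2 - x ^ 2 / 4) _
    (countable_singleton 0) hcont.continuousOn (fun x hx ↦ ?_)
    (continuous_mul_log.intervalIntegrable a b)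
  have hx0 : x ≠ 0 := hx.2
  convert! ((((hasDerivAt_pow 2 x).mul (hasDerivAt_log hx0)).div_const 2).sub
    ((hasDerivAt_pow 2 x).div_const 4)) using 1
  field_simp
  ring

theorem integral_mul_log_max {ρ R : ℝ} (hρ : 0 ≤ ρ) (hρR : ρ ≤ R) :
    ∫ r in 0..R, r * log (max r ρ) = R ^ 2 * log R / 2 - (R ^ 2 - ρ ^ 2) / 4 := by
  have hinner : EqOn (fun r ↦ r * log (max r ρ)) (fun r ↦ r * log ρ) (uIcc 0 ρ) := by
    intro r hr
    rw [uIcc_of_le hρ] at hr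
    simp only [max_eq_right hr.2]
  have houter : EqOn (fun r ↦ r * log (max r ρ)) (fun r ↦ r * log r) (uIcc ρ R) := by
    intro r hr
    rw [uIcc_of_le hρR] at hr
    simp only [max_eq_left hr.1]
  have hint_inner : IntervalIntegrable (fun r ↦ r * log (max r ρ)) volume 0 ρ :=
    ((continuous_mul_const (log ρ)).intervalIntegrable 0 ρ).congr_uIoo
      (hinner.symm.mono uIoo_subset_uIcc_self)
  have hint_outer : IntervalIntegrable (fun r ↦ r * log (max r ρ)) volume ρ R :=
    IntervalIntegrable.congr_uIoo (continuous_mul_log.intervalIntegrable ρ R)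
      (houter.symm.mono uIoo_subset_uIcc_self)
  rw [← intervalIntegral.integral_add_adjacent_intervals hint_inner hint_outer,
    intervalIntegral.integral_congr hinner, intervalIntegral.integral_congr houter,
    intervalIntegral.integral_mul_const, integral_id, integral_mul_log]
  ring

theorem circleAverage_log_norm_sub_const_eq_log_max (c a : ℂ) (R : ℝ) :
    circleAverage (log ‖· - a‖) c R = log (max |R| ‖c - a‖) := by
  rcases eq_or_ne R 0 with rfl | hR
  · simp
  · rw [← circleAverage_abs_radius,
      circleAverage_log_norm_sub_const_eq_log_radius_add_posLog (abs_ne_zero.2 hR),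
      posLog_eq_log_max_one (by positivity), ← log_mul (by positivity) (by positivity),
      mul_max_of_nonneg _ _ (abs_nonneg R), mul_one, mul_inv_cancel_left₀ (abs_ne_zero.2 hR)]

theorem integrableOn_log_norm_sub_ball (a c : ℂ) (R : ℝ) :
    IntegrableOn (fun w ↦ log ‖w - a‖) (ball c R) := by
  have hcentred (ρ : ℝ) : IntegrableOn (fun w : ℂ ↦ log ‖w‖) (ball 0 ρ) := by
    rw [integrableOn_fun_norm_addHaar, Complex.finrank_real_complex]
    simp only [Nat.add_one_sub_one, pow_one, smul_eq_mul]
    exact (continuous_mul_log.integrableOn_Icc).mono_set Ioo_subset_Icc_self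
  have hshift : IntegrableOn (fun w ↦ log ‖w - a‖) ((· - a) ⁻¹' ball 0 (R + dist c a)) :=
    ((measurePreserving_sub_right volume a).integrableOn_comp_preimage
      (measurableEmbedding_subRight a)).2 (hcentred _)
  refine hshift.mono_set fun w hw ↦ ?_
  rw [mem_preimage, mem_ball_zero_iff, ← dist_eq_norm]
  linarith [dist_triangle w c a, mem_ball.1 hw]

theorem setIntegral_ball_log_norm_sub {a c : ℂ} {R : ℝ} (ha : a ∈ closedBall c R) :
    ∫ w in ball c R, log ‖w - a‖ = π * R ^ 2 * log R - π / 2 * (R ^ 2 - ‖c - a‖ ^ 2) := by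
  have haR : ‖c - a‖ ≤ R := by rwa [mem_closedBall', dist_eq_norm] at ha
  have hR : 0 ≤ R := (norm_nonneg _).trans haR
  have hcircle : EqOn (fun r ↦ (2 * π * r) • circleAverage (log ‖· - a‖) c r)
      (fun r ↦ 2 * π * (r * log (max r ‖c - a‖))) (uIcc 0 R) := by
    intro r hr
    rw [uIcc_of_le hR] at hr
    simp only [circleAverage_log_norm_sub_const_eq_log_max, abs_of_nonneg hr.1, smul_eq_mul,
      mul_assoc]
  rw [setIntegral_ball_eq_integral_circleAverage hR (integrableOn_log_norm_sub_ball a c R),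
    intervalIntegral.integral_congr hcircle, intervalIntegral.integral_const_mul,
    integral_mul_log_max (norm_nonneg _) haR]
  ring

end LogarithmicPotential

section GreenFunction

/-- The Green function of the unit disc, the kernel of `greenPotential`. On the diagonal the
conventions for division and `log` give it the value `0` instead of `∞`. -/
def greenFunction (z w : ℂ) : ℝ :=
  log ‖(1 - z * conj w) / (z - w)‖

theorem sq_norm_one_sub_mul_conj_sub_sq_norm_sub (z w : ℂ) :
    ‖1 - z * conj w‖ ^ 2 - ‖z - w‖ ^ 2 = (1 - ‖z‖ ^ 2) * (1 - ‖w‖ ^ 2) := by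
  simp only [Complex.sq_norm, Complex.normSq_apply, Complex.sub_re, Complex.sub_im,
    Complex.mul_re, Complex.mul_im, Complex.conj_re, Complex.conj_im, Complex.one_re,
    Complex.one_im]
  ring

theorem greenFunction_nonneg {z w : ℂ} (hz : ‖z‖ ≤ 1) (hw : ‖w‖ ≤ 1) :
    0 ≤ greenFunction z w := by
  rcases eq_or_ne z w with rfl | hzw
  · simp [greenFunction]
  · refine log_nonneg ?_
    rw [norm_div, one_le_div (norm_sub_pos_iff.2 hzw), ← sq_le_sq₀ (norm_nonneg _) (norm_nonneg _),
      ← sub_nonneg, sq_norm_one_sub_mul_conj_sub_sq_norm_sub]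
    exact mul_nonneg (sub_nonneg.2 (pow_le_one₀ (norm_nonneg z) hz))
      (sub_nonneg.2 (pow_le_one₀ (norm_nonneg w) hw))

theorem one_sub_conj_mul_ne_zero {z w : ℂ} (hz : ‖z‖ < 1) (hw : ‖w‖ ≤ 1) :
    1 - conj z * w ≠ 0 := by
  refine sub_ne_zero.2 fun h ↦ ?_
  have : ‖conj z * w‖ < 1 := by
    rw [norm_mul, Complex.norm_conj]
    exact mul_lt_one_of_nonneg_of_lt_one_left (norm_nonneg z) hz hw
  rw [← h, norm_one] at this
  exact lt_irrefl _ this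

theorem greenFunction_eq_log_norm_sub_log_norm {z w : ℂ} (hz : ‖z‖ < 1) (hw : ‖w‖ ≤ 1)
    (hwz : w ≠ z) : greenFunction z w = log ‖1 - conj z * w‖ - log ‖w - z‖ := by
  have hconj : ‖1 - z * conj w‖ = ‖1 - conj z * w‖ := by
    rw [← Complex.norm_conj, map_sub, map_mul, map_one, Complex.conj_conj]
  rw [greenFunction, norm_div, hconj, norm_sub_rev z w,
    log_div (norm_ne_zero_iff.2 (one_sub_conj_mul_ne_zero hz hw)) (norm_sub_pos_iff.2 hwz).ne']

theorem greenFunction_ae_eq {z : ℂ} (hz : ‖z‖ < 1) :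
    greenFunction z =ᵐ[volume.restrict (ball 0 1)]
      fun w ↦ log ‖1 - conj z * w‖ - log ‖w - z‖ := by
  filter_upwards [ae_restrict_mem measurableSet_ball, Measure.ae_ne _ z] with w hw hwz
  exact greenFunction_eq_log_norm_sub_log_norm hz (mem_ball_zero_iff.1 hw).le hwz

theorem harmonicOnNhd_log_norm_one_sub_conj_mul {z : ℂ} (hz : ‖z‖ < 1) :
    HarmonicOnNhd (fun w ↦ log ‖1 - conj z * w‖) (closedBall 0 1) := fun w hw ↦
  AnalyticAt.harmonicAt_log_norm (by fun_prop)
    (one_sub_conj_mul_ne_zero hz (mem_closedBall_zero_iff.1 hw))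

theorem integrableOn_log_norm_one_sub_conj_mul {z : ℂ} (hz : ‖z‖ < 1) :
    IntegrableOn (fun w ↦ log ‖1 - conj z * w‖) (ball 0 1) :=
  ((harmonicOnNhd_log_norm_one_sub_conj_mul hz).continuousOn.integrableOn_compact
    (isCompact_closedBall 0 1)).mono_set ball_subset_closedBall

theorem integrableOn_greenFunction {z : ℂ} (hz : ‖z‖ < 1) :
    IntegrableOn (greenFunction z) (ball 0 1) :=
  ((integrableOn_log_norm_one_sub_conj_mul hz).sub (integrableOn_log_norm_sub_ball z 0 1)).congr
    (greenFunction_ae_eq hz).symm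

theorem setIntegral_greenFunction {z : ℂ} (hz : ‖z‖ < 1) :
    ∫ w in ball 0 1, greenFunction z w = π / 2 * (1 - ‖z‖ ^ 2) := by
  have hharmonic : ∫ w in ball 0 1, log ‖1 - conj z * w‖ = 0 := by
    simp [setIntegral_ball_of_harmonicOnNhd zero_le_one
      (harmonicOnNhd_log_norm_one_sub_conj_mul hz)]
  rw [integral_congr_ae (greenFunction_ae_eq hz),
    integral_sub (integrableOn_log_norm_one_sub_conj_mul hz) (integrableOn_log_norm_sub_ball z 0 1),
    hharmonic, setIntegral_ball_log_norm_sub (mem_closedBall_zero_iff.2 hz.le), zero_sub z,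
    norm_neg, log_one]
  ring

theorem norm_le_supD {g : ℂ → ℂ} (hg : BddAbove ((fun w ↦ ‖g w‖) '' ball 0 1)) {w : ℂ}
    (hw : w ∈ ball 0 1) : ‖g w‖ ≤ supD g :=
  le_csSup hg (mem_image_of_mem _ hw)

theorem bddAbove_norm_image_ball {E : Type*} [SeminormedAddCommGroup E] {X : Type*}
    [PseudoMetricSpace X] [ProperSpace X] {g : X → E} {c : X} {R : ℝ}
    (hg : ContinuousOn g (closedBall c R)) : BddAbove ((fun w ↦ ‖g w‖) '' ball c R) :=
  ((isCompact_closedBall c R).bddAbove_image hg.norm).mono (image_mono ball_subset_closedBall)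

theorem stmt6_general {g : ℂ → ℂ} {C : ℝ}
    (hg : AEStronglyMeasurable g (volume.restrict (ball 0 1)))
    (hgC : ∀ᵐ w ∂volume.restrict (ball 0 1), ‖g w‖ ≤ C) {z : ℂ} (hz : z ∈ ball 0 1) :
    IntegrableOn (fun w ↦ (greenFunction z w : ℂ) * g w) (ball 0 1) ∧
      ‖greenPotential g z‖ ≤ C / 4 * (1 - ‖z‖ ^ 2) := by
  rw [mem_ball_zero_iff] at hz
  have hkernel := integrableOn_greenFunction hz
  refine ⟨hkernel.ofReal.mul_bdd hg hgC, ?_⟩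
  have hpointwise : ∀ᵐ w ∂volume.restrict (ball 0 1),
      ‖(greenFunction z w : ℂ) * g w‖ ≤ greenFunction z w * C := by
    filter_upwards [ae_restrict_mem measurableSet_ball, hgC] with w hw hgw
    have hpos := greenFunction_nonneg hz.le (mem_ball_zero_iff.1 hw).le
    rw [norm_mul, Complex.norm_of_nonneg hpos]
    exact mul_le_mul_of_nonneg_left hgw hpos
  calc ‖greenPotential g z‖
      = 1 / (2 * π) * ‖∫ w in ball 0 1, (greenFunction z w : ℂ) * g w‖ := by
        rw [greenPotential, norm_smul, norm_of_nonneg (by positivity)]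
        rfl
    _ ≤ 1 / (2 * π) * ∫ w in ball 0 1, greenFunction z w * C := by
        gcongr
        exact norm_integral_le_of_norm_le (hkernel.mul_const C) hpointwise
    _ = C / 4 * (1 - ‖z‖ ^ 2) := by
        rw [integral_mul_const, setIntegral_greenFunction hz]
        field

end GreenFunction

/-- Bound on the Green potential: `|G_g(z)| ≤ (‖g‖_∞/4)(1-|z|²)`. -/
theorem stmt6 (g : ℂ → ℂ) (hg : ContinuousOn g (closedBall (0:ℂ) 1)) :
    ∀ z ∈ ball (0:ℂ) 1, ‖greenPotential g z‖ ≤ supD g / 4 * (1 - ‖z‖ ^ 2) := fun _ hz ↦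
  (stmt6_general ((hg.mono ball_subset_closedBall).aestronglyMeasurable measurableSet_ball)
    (ae_restrict_of_forall_mem measurableSet_ball fun _ ↦
      norm_le_supD (bddAbove_norm_image_ball hg)) hz).2
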